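/- arXiv:2001.03064 — 3 statements merged into one kernel-verified Lean document; each statement's English description precedes it below -/
import Mathlib

section
/- Let a, a₁, ã, a_j > 0 and κ, κ₁, κ̃ ≥ 0 with κ + κ₁ + κ̃ = 1. Suppose that for every t > 0 the following holds: if X ~ Gamma(at, a), Y ~ Gamma(a₁t, a₁) and Z ~ Gamma(ãt, ã) are independent random variables, then κX + κ₁Y + κ̃Z has the Gamma(a_j t, a_j) distribution. Then a_j = a·1_{κ>0} + a₁·1_{κ₁>0} + ã·1_{κ̃>0}; moreover κ·a_j = a whenever κ > 0, κ₁·a_j = a₁ whenever κ₁ > 0, and κ̃·a_j = ã whenever κ̃ > 0. -/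
open MeasureTheory ProbabilityTheory

/-- Laplace transform of the gamma distribution. -/
lemma gamma_laplace_aux {α r s : ℝ} (hα : 0 < α) (hr : 0 < r) (hs : 0 ≤ s) :
    ∫⁻ x, ENNReal.ofReal (Real.exp (-(s * x))) ∂(gammaMeasure α r)
      = ENNReal.ofReal ((r / (r + s)) ^ α) := by
  have hrs : 0 < r + s := by linarith
  unfold gammaMeasure
  have hm : Measurable (gammaPDF α r) := (measurable_gammaPDFReal α r).ennreal_ofReal
  have hm' : Measurable (gammaPDF α (r + s)) := (measurable_gammaPDFReal α (r + s)).ennreal_ofReal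
  rw [lintegral_withDensity_eq_lintegral_mul _ hm (by fun_prop)]
  have key : ∀ x, (gammaPDF α r * fun x => ENNReal.ofReal (Real.exp (-(s * x)))) x
      = ENNReal.ofReal ((r / (r + s)) ^ α) * gammaPDF α (r + s) x := by
    intro x
    simp only [Pi.mul_apply]
    rcases lt_or_ge x 0 with hx | hx
    · rw [gammaPDF_of_neg hx, gammaPDF_of_neg hx]; simp
    · rw [gammaPDF_of_nonneg hx, gammaPDF_of_nonneg hx,
        ← ENNReal.ofReal_mul' (Real.exp_pos _).le, ← ENNReal.ofReal_mul (by positivity)]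
      congr 1
      rw [Real.div_rpow hr.le hrs.le, show -((r + s) * x) = -(r * x) + -(s * x) by ring,
        Real.exp_add]
      have : (r + s) ^ α ≠ 0 := (Real.rpow_pos_of_pos hrs _).ne'
      have : Real.Gamma α ≠ 0 := (Real.Gamma_pos_of_pos hα).ne'
      field_simp
  rw [lintegral_congr key, lintegral_const_mul _ hm', lintegral_gammaPDF_eq_one hα hrs, mul_one]

/-- Derivative of the log-Laplace exponent. -/
lemma log_deriv_aux {a κ s : ℝ} (ha : 0 < a) (hκ : 0 ≤ κ) (hs : 0 < s) :
    HasDerivAt (fun s => a * Real.log (a / (a + κ * s))) (-(a * κ / (a + κ * s))) s := by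
  have hp : 0 < a + κ * s := by positivity
  have h1 : HasDerivAt (fun s => a + κ * s) κ s := by
    simpa using ((hasDerivAt_id s).const_mul κ).const_add a
  have h2 := ((h1.log hp.ne').const_sub (Real.log a)).const_mul a
  have h3 : HasDerivAt (fun s => a * (Real.log a - Real.log (a + κ * s)))
      (-(a * κ / (a + κ * s))) s :=
    h2.congr_deriv (by ring)
  refine h3.congr_of_eventuallyEq ?_
  filter_upwards [lt_mem_nhds hs] with y hy
  have : 0 < a + κ * y := by positivity
  rw [Real.log_div ha.ne' this.ne']

lemma deriv_deriv_aux {a κ s : ℝ} (ha : 0 < a) (hκ : 0 ≤ κ) (hs : 0 < s) :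
    HasDerivAt (fun s => -(a * κ / (a + κ * s))) (a * κ * κ / (a + κ * s) ^ 2) s := by
  have hp : 0 < a + κ * s := by positivity
  have h1 : HasDerivAt (fun s => a + κ * s) κ s := by
    simpa using ((hasDerivAt_id s).const_mul κ).const_add a
  have h2 := ((hasDerivAt_const s (a * κ)).div h1 hp.ne').neg
  exact h2.congr_deriv (by ring)

/-- the parameter identities (idgp1)–(idgp2). If for every `t > 0` the sum
`κX + κ₁Y + κ̃Z` of independent `X ~ Gamma(at, a)`, `Y ~ Gamma(a₁t, a₁)`, `Z ~ Gamma(ãt, ã)`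
has the `Gamma(aⱼt, aⱼ)` distribution, where `κ, κ₁, κ̃ ≥ 0` sum to `1`, then
`aⱼ = a·1_{κ>0} + a₁·1_{κ₁>0} + ã·1_{κ̃>0}` and `κ·aⱼ = a` whenever `κ > 0`,
`κ₁·aⱼ = a₁` whenever `κ₁ > 0`, `κ̃·aⱼ = ã` whenever `κ̃ > 0`. -/
theorem gamma_decomposition_parameters
    (a a₁ atil aj κ κ₁ κtil : ℝ)
    (ha : 0 < a) (ha₁ : 0 < a₁) (hatil : 0 < atil) (haj : 0 < aj)
    (hκ : 0 ≤ κ) (hκ₁ : 0 ≤ κ₁) (hκtil : 0 ≤ κtil) (hsum : κ + κ₁ + κtil = 1)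
    (h : ∀ t : ℝ, 0 < t →
      Measure.map (fun p : ℝ × ℝ × ℝ => κ * p.1 + κ₁ * p.2.1 + κtil * p.2.2)
        ((gammaMeasure (a * t) a).prod
          ((gammaMeasure (a₁ * t) a₁).prod (gammaMeasure (atil * t) atil)))
        = gammaMeasure (aj * t) aj) :
    aj = a * (if 0 < κ then 1 else 0) + a₁ * (if 0 < κ₁ then 1 else 0)
        + atil * (if 0 < κtil then 1 else 0) ∧
    (0 < κ → κ * aj = a) ∧ (0 < κ₁ → κ₁ * aj = a₁) ∧ (0 < κtil → κtil * aj = atil) := by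
  have h1 := h 1 one_pos
  simp only [mul_one] at h1
  -- Laplace transforms
  have hL : ∀ s : ℝ, 0 < s →
      a * Real.log (a / (a + κ * s)) + a₁ * Real.log (a₁ / (a₁ + κ₁ * s))
        + atil * Real.log (atil / (atil + κtil * s)) = aj * Real.log (aj / (aj + 1 * s)) := by
    intro s hs
    have e := congrArg (fun μ => ∫⁻ x, ENNReal.ofReal (Real.exp (-(s * x))) ∂μ) h1
    have := isProbabilityMeasure_gammaMeasure ha ha
    have := isProbabilityMeasure_gammaMeasure ha₁ ha₁
    have := isProbabilityMeasure_gammaMeasure hatil hatil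
    rw [gamma_laplace_aux haj haj hs.le, lintegral_map (by fun_prop) (by fun_prop)] at e
    have hf : ∀ p : ℝ × ℝ × ℝ,
        ENNReal.ofReal (Real.exp (-(s * (κ * p.1 + κ₁ * p.2.1 + κtil * p.2.2))))
        = ENNReal.ofReal (Real.exp (-((κ * s) * p.1))) *
          (fun q : ℝ × ℝ => ENNReal.ofReal (Real.exp (-((κ₁ * s) * q.1))) *
            ENNReal.ofReal (Real.exp (-((κtil * s) * q.2)))) p.2 := by
      intro p
      simp only
      rw [← ENNReal.ofReal_mul (Real.exp_pos _).le, ← ENNReal.ofReal_mul (Real.exp_pos _).le,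
        ← Real.exp_add, ← Real.exp_add]
      congr 2; ring
    rw [lintegral_congr hf,
      lintegral_prod_mul (f := fun x : ℝ => ENNReal.ofReal (Real.exp (-((κ * s) * x))))
        (g := fun q : ℝ × ℝ => ENNReal.ofReal (Real.exp (-((κ₁ * s) * q.1))) *
            ENNReal.ofReal (Real.exp (-((κtil * s) * q.2))))
        (μ := gammaMeasure a a) (ν := (gammaMeasure a₁ a₁).prod (gammaMeasure atil atil))
        (by fun_prop) (by fun_prop),
      lintegral_prod_mul (f := fun x : ℝ => ENNReal.ofReal (Real.exp (-((κ₁ * s) * x))))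
        (g := fun x : ℝ => ENNReal.ofReal (Real.exp (-((κtil * s) * x))))
        (μ := gammaMeasure a₁ a₁) (ν := gammaMeasure atil atil)
        (by fun_prop) (by fun_prop),
      gamma_laplace_aux ha ha (by positivity), gamma_laplace_aux ha₁ ha₁ (by positivity),
      gamma_laplace_aux hatil hatil (by positivity),
      ← ENNReal.ofReal_mul (by positivity), ← ENNReal.ofReal_mul (by positivity),
      ENNReal.ofReal_eq_ofReal_iff (by positivity) (by positivity)] at e
    have q1 : 0 < a / (a + κ * s) := by positivity
    have q2 : 0 < a₁ / (a₁ + κ₁ * s) := by positivity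
    have q3 : 0 < atil / (atil + κtil * s) := by positivity
    have q4 : 0 < aj / (aj + s) := by positivity
    have e2 := congrArg Real.log e
    rw [Real.log_mul (by positivity) (by positivity), Real.log_mul (by positivity) (by positivity),
      Real.log_rpow q1, Real.log_rpow q2, Real.log_rpow q3, Real.log_rpow q4] at e2
    rw [one_mul]
    linarith
  have hD : ∀ s : ℝ, 0 < s →
      -(a * κ / (a + κ * s)) + -(a₁ * κ₁ / (a₁ + κ₁ * s)) + -(atil * κtil / (atil + κtil * s))
        = -(aj * 1 / (aj + 1 * s)) := by
    intro s hs
    have d1 := ((log_deriv_aux ha hκ hs).add (log_deriv_aux ha₁ hκ₁ hs)).add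
      (log_deriv_aux hatil hκtil hs)
    have d2 := log_deriv_aux haj zero_le_one hs
    refine d1.unique (d2.congr_of_eventuallyEq ?_)
    filter_upwards [lt_mem_nhds hs] with y hy
    exact hL y hy
  have hDD : a * κ * κ / (a + κ * 1) ^ 2 + a₁ * κ₁ * κ₁ / (a₁ + κ₁ * 1) ^ 2
      + atil * κtil * κtil / (atil + κtil * 1) ^ 2 = aj * 1 * 1 / (aj + 1 * 1) ^ 2 := by
    have d1 := ((deriv_deriv_aux ha hκ one_pos).add (deriv_deriv_aux ha₁ hκ₁ one_pos)).add
      (deriv_deriv_aux hatil hκtil one_pos)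
    have d2 := deriv_deriv_aux haj zero_le_one one_pos
    refine d1.unique (d2.congr_of_eventuallyEq ?_)
    filter_upwards [lt_mem_nhds one_pos] with y hy
    exact hD y hy
  have hD1 := hD 1 one_pos
  -- variance argument
  obtain ⟨u, hu⟩ : ∃ u, u = a / (a + κ) := ⟨_, rfl⟩
  obtain ⟨v, hv⟩ : ∃ v, v = a₁ / (a₁ + κ₁) := ⟨_, rfl⟩
  obtain ⟨w, hw⟩ : ∃ w, w = atil / (atil + κtil) := ⟨_, rfl⟩
  obtain ⟨z, hz⟩ : ∃ z, z = aj / (aj + 1) := ⟨_, rfl⟩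
  have f1 : ∀ b k : ℝ, b * k / (b + k * 1) = k * (b / (b + k)) := by
    intro b k; rw [mul_one]; ring
  have f2 : ∀ b k : ℝ, 0 < b → 0 ≤ k → b * k * k / (b + k * 1) ^ 2
      = k * (b / (b + k) - (b / (b + k)) ^ 2) := by
    intro b k hb hk
    have : b + k ≠ 0 := by positivity
    rw [mul_one]; field_simp; ring
  rw [f1, f1, f1, f1, ← hu, ← hv, ← hw, ← hz] at hD1
  rw [f2 _ _ ha hκ, f2 _ _ ha₁ hκ₁, f2 _ _ hatil hκtil, f2 _ _ haj zero_le_one,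
    ← hu, ← hv, ← hw, ← hz] at hDD
  have hvar : κ * (u - z) ^ 2 + κ₁ * (v - z) ^ 2 + κtil * (w - z) ^ 2 = 0 := by
    linear_combination (2 * z - 1) * hD1 - hDD + z ^ 2 * hsum
  have p1 : 0 ≤ κ * (u - z) ^ 2 := by positivity
  have p2 : 0 ≤ κ₁ * (v - z) ^ 2 := by positivity
  have p3 : 0 ≤ κtil * (w - z) ^ 2 := by positivity
  have fin : ∀ b k x : ℝ, 0 < b → x = b / (b + k) → k * (x - z) ^ 2 = 0 → 0 < k → k * aj = b := by
    intro b k x hb hx h0 hk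
    have hxz : x = z := by
      rcases mul_eq_zero.1 h0 with h | h
      · exact absurd h hk.ne'
      · exact sub_eq_zero.1 (pow_eq_zero_iff two_ne_zero |>.1 h)
    rw [hx, hz, div_eq_div_iff (by positivity) (by positivity)] at hxz
    linarith
  have r1 := fin a κ u ha hu (by linarith)
  have r2 := fin a₁ κ₁ v ha₁ hv (by linarith)
  have r3 := fin atil κtil w hatil hw (by linarith)
  refine ⟨?_, r1, r2, r3⟩
  have g : ∀ b k : ℝ, 0 ≤ k → (0 < k → k * aj = b) → b * (if 0 < k then 1 else 0) = k * aj := by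
    intro b k hk hh
    split_ifs with h
    · rw [hh h, mul_one]
    · have : k = 0 := le_antisymm (not_lt.1 h) hk
      simp [this]
  rw [g _ _ hκ r1, g _ _ hκ₁ r2, g _ _ hκtil r3]
  linear_combination (-aj) * hsum
end

section
/- For every real p, ∫₀^∞ x^{−3/2} e^{−1/x} Φ(p/√x) dx = (1/√π)·(π/2 + sign(p)·arctan(|p|/√2)), where Φ is the standard normal distribution function and sign(0) = 0. -/
open MeasureTheory Real Set

/-- The standard normal distribution function `Φ(u) = (2π)^{-1/2} ∫_{-∞}^u e^{-y²/2} dy`. -/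
noncomputable def stdNormalCDF (u : ℝ) : ℝ :=
  (Real.sqrt (2 * Real.pi))⁻¹ * ∫ y in Iic u, Real.exp (-y ^ 2 / 2)

lemma aux_int : Integrable (fun y : ℝ => Real.exp (-y ^ 2 / 2)) := by
  have h := integrable_exp_neg_mul_sq (b := 1 / 2) (by norm_num)
  refine h.congr (Filter.Eventually.of_forall fun y => ?_)
  simp only
  congr 1
  ring

lemma aux_total : ∫ y : ℝ, Real.exp (-y ^ 2 / 2) = Real.sqrt (2 * Real.pi) := by
  have h := integral_gaussian (1 / 2)
  rw [show 2 * Real.pi = Real.pi / (1 / 2) by ring, ← h]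
  congr 1
  ext y
  congr 1
  ring

lemma aux_deriv (u : ℝ) :
    HasDerivAt stdNormalCDF ((Real.sqrt (2 * Real.pi))⁻¹ * Real.exp (-u ^ 2 / 2)) u := by
  have hc : Continuous (fun y : ℝ => Real.exp (-y ^ 2 / 2)) := by fun_prop
  have h1 : stdNormalCDF = fun u => (Real.sqrt (2 * Real.pi))⁻¹ *
      ((∫ y in Iic (0 : ℝ), Real.exp (-y ^ 2 / 2)) + ∫ y in (0 : ℝ)..u, Real.exp (-y ^ 2 / 2)) := by
    ext u
    rw [stdNormalCDF, ← intervalIntegral.integral_Iic_sub_Iic aux_int.integrableOn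
      aux_int.integrableOn]
    ring
  rw [h1]
  exact ((hc.integral_hasStrictDerivAt 0 u).hasDerivAt.const_add _).const_mul _

lemma aux_cont : Continuous stdNormalCDF :=
  continuous_iff_continuousAt.2 fun u => (aux_deriv u).continuousAt

lemma aux_bound (u : ℝ) : ‖stdNormalCDF u‖ ≤ 1 := by
  have hpos : 0 < Real.sqrt (2 * Real.pi) := by positivity
  have h0 : 0 ≤ ∫ y in Iic u, Real.exp (-y ^ 2 / 2) :=
    integral_nonneg fun y => (Real.exp_pos _).le
  have h1 : ∫ y in Iic u, Real.exp (-y ^ 2 / 2) ≤ Real.sqrt (2 * Real.pi) := by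
    rw [← aux_total]
    exact setIntegral_le_integral aux_int (Filter.Eventually.of_forall fun y => (Real.exp_pos _).le)
  rw [stdNormalCDF, Real.norm_of_nonneg (by positivity), inv_mul_le_iff₀ hpos]
  linarith

lemma aux_zero : stdNormalCDF 0 = 1 / 2 := by
  have h := integral_gaussian_Ioi (1 / 2)
  have h2 : ∫ y in Iic (0 : ℝ), Real.exp (-y ^ 2 / 2) = Real.sqrt (2 * Real.pi) / 2 := by
    have h3 := integral_comp_neg_Ioi (0 : ℝ) (fun y => Real.exp (-y ^ 2 / 2))
    rw [neg_zero] at h3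
    rw [← h3, show 2 * Real.pi = Real.pi / (1 / 2) by ring, ← h]
    congr 1
    ext y
    congr 1
    ring
  have hpos : 0 < Real.sqrt (2 * Real.pi) := by positivity
  rw [stdNormalCDF, h2]
  field_simp

lemma aux_moment (b : ℝ) (hb : 0 < b) :
    IntegrableOn (fun u : ℝ => u * Real.exp (-b * u ^ 2)) (Ioi 0) ∧
    ∫ u in Ioi (0 : ℝ), u * Real.exp (-b * u ^ 2) = (2 * b)⁻¹ := by
  constructor
  · exact (integrable_mul_exp_neg_mul_sq hb).integrableOn
  · have h := integral_mul_cexp_neg_mul_sq (b := (b : ℂ)) (by simpa using hb)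
    have h2 : ((∫ u in Ioi (0 : ℝ), u * Real.exp (-b * u ^ 2) : ℝ) : ℂ) = (2 * (b : ℂ))⁻¹ := by
      rw [← h, ← integral_complex_ofReal]
      congr 1
      ext y
      push_cast
      rfl
    exact_mod_cast h2

noncomputable def auxF (p : ℝ) : ℝ :=
  ∫ u in Ioi (0 : ℝ), Real.exp (-1 * u ^ 2) * stdNormalCDF (p * u)

lemma auxF_deriv (p : ℝ) :
    HasDerivAt auxF ((Real.sqrt (2 * Real.pi))⁻¹ * (2 * (1 + p ^ 2 / 2))⁻¹) p := by
  have hb : 0 < 1 + p ^ 2 / 2 := by positivity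
  have key := (hasDerivAt_integral_of_dominated_loc_of_deriv_le
    (μ := volume.restrict (Ioi (0 : ℝ)))
    (F := fun p u => Real.exp (-1 * u ^ 2) * stdNormalCDF (p * u))
    (F' := fun p u => Real.exp (-1 * u ^ 2) *
      (((Real.sqrt (2 * Real.pi))⁻¹ * Real.exp (-(p * u) ^ 2 / 2)) * u))
    (x₀ := p) (s := univ)
    (bound := fun u => (Real.sqrt (2 * Real.pi))⁻¹ * (u * Real.exp (-1 * u ^ 2)))
    Filter.univ_mem ?_ ?_ ?_ ?_ ?_ ?_).2
  · have e : (∫ u in Ioi (0 : ℝ), Real.exp (-1 * u ^ 2) *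
      (((Real.sqrt (2 * Real.pi))⁻¹ * Real.exp (-(p * u) ^ 2 / 2)) * u))
        = (Real.sqrt (2 * Real.pi))⁻¹ * (2 * (1 + p ^ 2 / 2))⁻¹ := by
      rw [← (aux_moment _ hb).2, ← integral_const_mul]
      congr 1
      ext u
      rw [show -(1 + p ^ 2 / 2) * u ^ 2 = -1 * u ^ 2 + -(p * u) ^ 2 / 2 by ring, Real.exp_add]
      ring
    rw [e] at key
    exact key
  · refine Filter.Eventually.of_forall fun q => Continuous.aestronglyMeasurable ?_
    have := aux_cont
    fun_prop
  · refine Integrable.mono' (integrable_exp_neg_mul_sq (b := 1) one_pos).integrableOn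
      (Continuous.aestronglyMeasurable ?_) (Filter.Eventually.of_forall fun u => ?_)
    · have := aux_cont
      fun_prop
    · rw [norm_mul, Real.norm_of_nonneg (Real.exp_pos _).le]
      exact mul_le_of_le_one_right (Real.exp_pos _).le (aux_bound _)
  · exact Continuous.aestronglyMeasurable (by fun_prop)
  · refine (ae_restrict_iff' measurableSet_Ioi).2 (Filter.Eventually.of_forall fun u hu q _ => ?_)
    have hu : 0 < u := hu
    rw [Real.norm_of_nonneg (by positivity)]
    have : Real.exp (-(q * u) ^ 2 / 2) ≤ 1 := Real.exp_le_one_iff.2 (by nlinarith [sq_nonneg (q * u)])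
    calc _ = ((Real.sqrt (2 * Real.pi))⁻¹ * (u * Real.exp (-1 * u ^ 2))) *
          Real.exp (-(q * u) ^ 2 / 2) := by ring
      _ ≤ _ := mul_le_of_le_one_right (by positivity) this
  · exact (aux_moment 1 one_pos).1.const_mul _
  · refine Filter.Eventually.of_forall fun u q _ => ?_
    have h1 : HasDerivAt (fun q : ℝ => q * u) u q := by
      simpa using (hasDerivAt_id q).mul_const u
    exact ((aux_deriv (q * u)).comp q h1).const_mul _

lemma auxF_zero : auxF 0 = Real.sqrt Real.pi / 4 := by
  have h := integral_gaussian_Ioi 1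
  rw [div_one] at h
  simp only [auxF, zero_mul, aux_zero]
  rw [integral_mul_const, h]
  ring

lemma auxF_eq (p : ℝ) :
    2 * auxF p = (Real.sqrt Real.pi)⁻¹ * (Real.pi / 2 + Real.arctan (p / Real.sqrt 2)) := by
  have hπ : 0 < Real.sqrt Real.pi := by positivity
  have h2 : 0 < Real.sqrt 2 := by positivity
  have hd : ∀ q : ℝ, HasDerivAt (fun p => 2 * auxF p -
      (Real.sqrt Real.pi)⁻¹ * (Real.pi / 2 + Real.arctan (p / Real.sqrt 2))) 0 q := by
    intro q
    have h1 := ((((hasDerivAt_id q).div_const (Real.sqrt 2)).arctan.const_add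
      (Real.pi / 2)).const_mul (Real.sqrt Real.pi)⁻¹)
    have h3 := ((auxF_deriv q).const_mul 2).sub h1
    have hs : Real.sqrt 2 ^ 2 = 2 := Real.sq_sqrt (by norm_num)
    have e : 2 * ((Real.sqrt (2 * Real.pi))⁻¹ * (2 * (1 + q ^ 2 / 2))⁻¹) -
        (Real.sqrt Real.pi)⁻¹ * (1 / (1 + (id q / Real.sqrt 2) ^ 2) * (1 / Real.sqrt 2)) = 0 := by
      simp only [id]
      rw [Real.sqrt_mul (by norm_num), div_pow, hs]
      have : 1 + q ^ 2 / 2 ≠ 0 := by positivity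
      field_simp
      ring
    rw [e] at h3
    exact h3
  have hc := is_const_of_deriv_eq_zero (fun q => (hd q).differentiableAt)
    (fun q => (hd q).deriv) p 0
  simp only [auxF_zero, zero_div, Real.arctan_zero, add_zero] at hc
  have hs : Real.sqrt Real.pi ^ 2 = Real.pi := Real.sq_sqrt Real.pi_pos.le
  have : 2 * (Real.sqrt Real.pi / 4) - (Real.sqrt Real.pi)⁻¹ * (Real.pi / 2) = 0 := by
    field_simp
    rw [hs]
    ring
  linarith

/-- the closed-form evaluation (jmeq): for every real `p`,
`∫₀^∞ x^{-3/2} e^{-1/x} Φ(p/√x) dx = (1/√π)(π/2 + sign(p) arctan(|p|/√2))`. -/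
theorem integral_eval_arctan (p : ℝ) :
    ∫ x in Ioi (0 : ℝ), x ^ (-(3 : ℝ) / 2) * Real.exp (-1 / x) * stdNormalCDF (p / Real.sqrt x)
      = (Real.sqrt Real.pi)⁻¹ *
        (Real.pi / 2 + Real.sign p * Real.arctan (|p| / Real.sqrt 2)) := by
  have hs : Real.sign p * Real.arctan (|p| / Real.sqrt 2) = Real.arctan (p / Real.sqrt 2) := by
    rcases lt_trichotomy p 0 with h | h | h
    · rw [Real.sign_of_neg h, abs_of_neg h, neg_div, Real.arctan_neg]
      ring
    · simp [h]
    · rw [Real.sign_of_pos h, abs_of_pos h, one_mul]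
  rw [hs, ← auxF_eq, auxF, ← integral_comp_rpow_Ioi
    (fun u => Real.exp (-1 * u ^ 2) * stdNormalCDF (p * u)) (p := -(1 / 2 : ℝ)) (by norm_num),
    ← integral_const_mul]
  refine setIntegral_congr_fun measurableSet_Ioi fun x hx => ?_
  have hx : 0 < x := hx
  have e1 : x ^ (-(1 / 2 : ℝ)) = (Real.sqrt x)⁻¹ := by
    rw [Real.rpow_neg hx.le, Real.sqrt_eq_rpow]
  have e2 : |(-(1 / 2 : ℝ))| = 1 / 2 := by rw [abs_neg, abs_of_pos]; norm_num
  simp only [smul_eq_mul]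
  rw [e1, e2, inv_pow, Real.sq_sqrt hx.le, show (-(1 / 2) - 1 : ℝ) = -3 / 2 by norm_num,
    div_eq_mul_inv (-1) x, div_eq_mul_inv p]
  ring
end

section
/- Let α > −1, c > 0 and h ∈ ℝ with h² < 2c. Then ∫₀^∞ x^α e^{−cx} Φ(h√x) dx = (Γ(α + 3/2)/(c^{α+1}√(2π))) · [ B(1/2, α + 1)/√2 + (h/√c) · ₂F₁(α + 3/2, 1/2, 3/2; −h²/(2c)) ], where ₂F₁ is the Gauss hypergeometric function (given on |z| < 1 by its power series Σ_{n≥0} ((a)_n(b)_n/(c)_n) zⁿ/n!), Γ is the gamma function and B is the beta function. -/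
open MeasureTheory Real Set

/-- The Gauss hypergeometric function `₂F₁(a, b, c; z)`, given by its power series
`Σₙ (a)ₙ(b)ₙ/(c)ₙ · zⁿ/n!` where `(a)ₙ` is the Pochhammer symbol. -/
noncomputable def hyp2F1 (a b c z : ℝ) : ℝ :=
  ∑' n : ℕ, ((ascPochhammer ℝ n).eval a * (ascPochhammer ℝ n).eval b /
    (ascPochhammer ℝ n).eval c) * z ^ n / n.factorial

/-- The Euler beta function `B(x, y) = Γ(x)Γ(y)/Γ(x+y)`. -/
noncomputable def betaFun (x y : ℝ) : ℝ :=
  Real.Gamma x * Real.Gamma y / Real.Gamma (x + y)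


lemma aux_cdf_eq (u : ℝ) : stdNormalCDF u
    = 1 / 2 + (Real.sqrt (2 * Real.pi))⁻¹ * ∫ y in (0:ℝ)..u, Real.exp (-y ^ 2 / 2) := by
  have hfun : (fun y : ℝ => Real.exp (-y ^ 2 / 2)) = fun y => Real.exp (-(1/2) * y ^ 2) := by
    funext y; congr 1; ring
  have hint : Integrable (fun y : ℝ => Real.exp (-y ^ 2 / 2)) := by
    rw [hfun]; exact integrable_exp_neg_mul_sq (by norm_num)
  have h1 := intervalIntegral.integral_Iic_sub_Iic (hint.integrableOn (s := Iic 0))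
    (hint.integrableOn (s := Iic u))
  have h0 : ∫ y in Iic (0:ℝ), Real.exp (-y ^ 2 / 2) = √(2 * π) / 2 := by
    have h2 := integral_comp_neg_Iic (0:ℝ) (fun y : ℝ => Real.exp (-y ^ 2 / 2))
    simp only [even_two, Even.neg_pow, neg_zero] at h2
    rw [h2, hfun, integral_gaussian_Ioi]
    congr 2; ring
  have hp : √(2 * π) ≠ 0 := by positivity
  rw [stdNormalCDF, ← h1, h0]
  field_simp
  ring

lemma aux_congr {f g : ℕ → ℝ} {a : ℝ} (hf : HasSum f a) (h : ∀ n, g n = f n) :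
    HasSum g a := by
  rwa [funext h]

lemma aux_series (u : ℝ) :
    HasSum (fun n : ℕ => (-1/2) ^ n * u ^ (2 * n + 1) / (n.factorial * (2 * n + 1)))
      (∫ y in (0:ℝ)..u, Real.exp (-y ^ 2 / 2)) := by
  have key := intervalIntegral.hasSum_integral_of_dominated_convergence (μ := volume)
    (a := 0) (b := u) (F := fun (n : ℕ) (y : ℝ) => (-y ^ 2 / 2) ^ n / (n.factorial : ℝ))
    (f := fun y => Real.exp (-y ^ 2 / 2))
    (fun n _ => (u ^ 2 / 2) ^ n / (n.factorial : ℝ)) ?_ ?_ ?_ ?_ ?_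
  · refine aux_congr key fun n => ?_
    have : ∀ y : ℝ, (-y ^ 2 / 2) ^ n / (n.factorial : ℝ)
        = ((-1/2) ^ n / n.factorial) * y ^ (2 * n) := by
      intro y
      rw [show -y ^ 2 / 2 = (-1/2) * y ^ 2 by ring, mul_pow, ← pow_mul]; ring
    simp_rw [this]
    rw [intervalIntegral.integral_const_mul, integral_pow]
    push_cast
    have : (2 * (n:ℝ) + 1) ≠ 0 := by positivity
    have : (n.factorial : ℝ) ≠ 0 := by positivity
    field_simp
    simp
  · intro n
    exact (by fun_prop : Continuous _).aestronglyMeasurable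
  · intro n
    refine Filter.Eventually.of_forall fun y hy => ?_
    have hy2 : y ^ 2 ≤ u ^ 2 := by
      rw [sq_le_sq]
      rcases le_total 0 u with hu | hu
      · rw [uIoc_of_le hu] at hy
        rw [abs_of_pos hy.1, abs_of_nonneg hu]; exact hy.2
      · rw [uIoc_of_ge hu] at hy
        rw [abs_of_nonpos hy.2, abs_of_nonpos hu]; linarith [hy.1]
    rw [norm_div, norm_pow, Real.norm_eq_abs, Real.norm_eq_abs, Nat.abs_cast, neg_div, abs_neg,
      abs_of_nonneg (by positivity)]
    gcongr
  · exact Filter.Eventually.of_forall fun y _ => Real.summable_pow_div_factorial _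
  · exact intervalIntegrable_const
  · refine Filter.Eventually.of_forall fun y _ => ?_
    rw [Real.exp_eq_exp_ℝ]
    exact NormedSpace.expSeries_div_hasSum_exp _

lemma aux_gamma (a : ℝ) (ha : 0 < a) (n : ℕ) :
    Real.Gamma (a + n) = Real.Gamma a * (ascPochhammer ℝ n).eval a := by
  induction n with
  | zero => simp
  | succ n ih =>
    rw [ascPochhammer_succ_eval, Nat.cast_succ, ← add_assoc,
      Real.Gamma_add_one (by positivity), ih]
    ring

lemma aux_poch (n : ℕ) :
    (ascPochhammer ℝ n).eval (3 / 2 : ℝ) = (2 * n + 1) * (ascPochhammer ℝ n).eval (1 / 2 : ℝ) := by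
  induction n with
  | zero => simp
  | succ n ih =>
    rw [ascPochhammer_succ_eval, ascPochhammer_succ_eval, ih]
    push_cast
    ring

lemma aux_summable (a z : ℝ) (ha : 0 < a) (hz : |z| < 1) :
    Summable fun n : ℕ => ‖((ascPochhammer ℝ n).eval a * (ascPochhammer ℝ n).eval (1 / 2 : ℝ) /
    (ascPochhammer ℝ n).eval (3 / 2 : ℝ)) * z ^ n / n.factorial‖ := by
  have hr := ordinaryHypergeometricSeries_radius_eq_one (𝔸 := ℝ) a (1/2 : ℝ) (3/2)
    (fun k => by
      have : (0:ℝ) ≤ k := by positivity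
      refine ⟨?_, ?_, ?_⟩ <;> intro h <;> linarith)
  have := (ordinaryHypergeometricSeries ℝ a (1/2 : ℝ) (3/2)).summable_norm_apply (x := z) (by
    rw [hr, mem_eball_zero_iff, ← ofReal_norm, Real.norm_eq_abs]
    exact ENNReal.ofReal_lt_one.2 hz)
  refine this.congr fun n => ?_
  rw [ordinaryHypergeometricSeries_apply_eq, smul_eq_mul]
  congr 1
  ring

lemma aux_int_s14 (K s c : ℝ) (hs : 0 < s) (hc : 0 < c) :
    IntegrableOn (fun x : ℝ => K * (x ^ (s - 1) * Real.exp (-(c * x)))) (Ioi 0) ∧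
    ∫ x in Ioi (0:ℝ), K * (x ^ (s - 1) * Real.exp (-(c * x))) = K * ((1 / c) ^ s * Real.Gamma s) ∧
    ∫ x in Ioi (0:ℝ), ‖K * (x ^ (s - 1) * Real.exp (-(c * x)))‖
      = ‖K * ((1 / c) ^ s * Real.Gamma s)‖ := by
  have key := Real.integral_rpow_mul_exp_neg_mul_Ioi hs hc
  have hG := Real.Gamma_pos_of_pos hs
  have hpos : 0 < (1 / c) ^ s * Real.Gamma s := by positivity
  have hint : IntegrableOn (fun x : ℝ => x ^ (s - 1) * Real.exp (-(c * x))) (Ioi 0) :=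
    .of_integral_ne_zero (by rw [key]; exact hpos.ne')
  refine ⟨hint.const_mul K, by rw [integral_const_mul, key], ?_⟩
  rw [norm_mul, Real.norm_of_nonneg hpos.le, ← key, ← integral_const_mul]
  refine setIntegral_congr_fun measurableSet_Ioi fun x hx => ?_
  have hx : 0 < x := hx
  rw [norm_mul, Real.norm_of_nonneg (r := x ^ (s - 1) * Real.exp (-(c * x))) (by positivity)]

lemma aux_term (α c h : ℝ) (hα : -1 < α) (hc : 0 < c) (n : ℕ) :
    ((√(2 * π))⁻¹ * ((-1/2) ^ n * h ^ (2 * n + 1) / (n.factorial * (2 * n + 1)))) *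
      ((1 / c) ^ (α + 3 / 2 + n) * Real.Gamma (α + 3 / 2 + n))
    = (Real.Gamma (α + 3 / 2) / (c ^ (α + 1) * Real.sqrt (2 * Real.pi)) * (h / √c)) *
      (((ascPochhammer ℝ n).eval (α + 3 / 2) * (ascPochhammer ℝ n).eval (1 / 2 : ℝ) /
    (ascPochhammer ℝ n).eval (3 / 2 : ℝ)) * (-h ^ 2 / (2 * c)) ^ n / n.factorial) := by
  have hp : 0 < (ascPochhammer ℝ n).eval (1 / 2 : ℝ) := ascPochhammer_pos n _ (by norm_num)
  rw [aux_gamma _ (by linarith), aux_poch, show α + 3 / 2 + n = (α + 1) + 1/2 + n by ring,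
    Real.rpow_add_natCast (by positivity), Real.rpow_add (by positivity), ← Real.sqrt_eq_rpow,
    Real.div_rpow zero_le_one hc.le, Real.one_rpow, Real.sqrt_div zero_le_one, Real.sqrt_one,
    show -h ^ 2 / (2 * c) = (-1/2) * h ^ 2 * (1 / c) by field_simp, mul_pow, mul_pow, ← pow_mul,
    pow_succ h]
  have : (2 * (n:ℝ) + 1) ≠ 0 := by positivity
  have : (n.factorial : ℝ) ≠ 0 := by positivity
  have : √c ≠ 0 := by positivity
  have : √(2 * π) ≠ 0 := by positivity
  have : c ^ (α + 1) ≠ 0 := by positivity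
  generalize c ^ (α + 1) = A at *
  generalize √(2 * π) = B at *
  generalize √c = C at *
  generalize (-1 / 2 : ℝ) ^ n = D
  generalize (1 / c : ℝ) ^ n = E
  field_simp

set_option maxHeartbeats 2000000 in
/-- the integral evaluation (it11): for `α > -1`, `c > 0` and `h² < 2c`,
`∫₀^∞ xᵅ e^{-cx} Φ(h√x) dx
  = Γ(α + 3/2)/(c^{α+1}√(2π)) · (B(1/2, α+1)/√2 + (h/√c) ₂F₁(α + 3/2, 1/2, 3/2; -h²/(2c)))`. -/
theorem integral_rpow_exp_normalCDF (α c h : ℝ) (hα : -1 < α) (hc : 0 < c)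
    (hh : h ^ 2 < 2 * c) :
    ∫ x in Ioi (0 : ℝ), x ^ α * Real.exp (-c * x) * stdNormalCDF (h * Real.sqrt x)
      = Real.Gamma (α + 3 / 2) / (c ^ (α + 1) * Real.sqrt (2 * Real.pi)) *
        (betaFun (1 / 2) (α + 1) / Real.sqrt 2 +
          h / Real.sqrt c * hyp2F1 (α + 3 / 2) (1 / 2) (3 / 2) (-h ^ 2 / (2 * c))) := by
  let K : ℕ → ℝ := fun m => Nat.casesOn m (1 / 2)
    (fun n => (√(2 * π))⁻¹ * ((-1/2) ^ n * h ^ (2 * n + 1) / (n.factorial * (2 * n + 1))))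
  let s : ℕ → ℝ := fun m => Nat.casesOn m (α + 1) (fun n => α + 3 / 2 + n)
  have hs : ∀ m, 0 < s m := by
    intro m
    cases m with
    | zero => change 0 < α + 1; linarith
    | succ n =>
      change 0 < α + 3 / 2 + (n : ℝ)
      have : (0:ℝ) ≤ n := by positivity
      linarith
  let F : ℕ → ℝ → ℝ := fun m x => K m * (x ^ (s m - 1) * Real.exp (-(c * x)))
  have hz : |(-h ^ 2 / (2 * c))| < 1 := by
    rw [neg_div, abs_neg, abs_of_nonneg (by positivity), div_lt_one (by positivity)]
    exact hh
  have hS := aux_summable (α + 3 / 2) _ (by linarith) hz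
  have hsum1 : Summable fun n : ℕ => K (n + 1) * ((1 / c) ^ s (n + 1) * Real.Gamma (s (n + 1))) := by
    refine (hS.of_norm.mul_left (Real.Gamma (α + 3 / 2) /
      (c ^ (α + 1) * Real.sqrt (2 * Real.pi)) * (h / √c))).congr fun n => ?_
    exact (aux_term α c h hα hc n).symm
  have hsum : Summable fun m => ∫ x in Ioi (0:ℝ), ‖F m x‖ := by
    have : (fun m => ∫ x in Ioi (0:ℝ), ‖F m x‖)
        = fun m => ‖K m * ((1 / c) ^ s m * Real.Gamma (s m))‖ := by
      funext m; exact (aux_int_s14 _ _ _ (hs m) hc).2.2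
    rw [this]
    rw [← summable_nat_add_iff 1]
    exact hsum1.norm
  have main := hasSum_integral_of_summable_integral_norm
    (fun m => (aux_int_s14 (K m) (s m) c (hs m) hc).1) hsum
  have hL : ∫ x in Ioi (0 : ℝ), x ^ α * Real.exp (-c * x) * stdNormalCDF (h * Real.sqrt x)
      = ∫ x in Ioi (0:ℝ), ∑' m, F m x := by
    refine setIntegral_congr_fun measurableSet_Ioi fun x hx => ?_
    have hx : 0 < x := hx
    rw [aux_cdf_eq]
    have h1 := ((aux_series (h * √x)).mul_left ((√(2 * π))⁻¹)).mul_left (x ^ α * Real.exp (-c * x))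
    have h2 : HasSum (fun n => F (n + 1) x) (x ^ α * rexp (-c * x) *
        ((√(2 * π))⁻¹ * ∫ (y : ℝ) in 0..h * √x, rexp (-y ^ 2 / 2))) := by
      refine aux_congr h1 fun n => ?_
      change (√(2 * π))⁻¹ * ((-1/2) ^ n * h ^ (2 * n + 1) / (n.factorial * (2 * n + 1))) *
        (x ^ (α + 3 / 2 + n - 1) * Real.exp (-(c * x))) = _
      rw [show α + 3 / 2 + n - 1 = α + 1 / 2 + n by ring, Real.rpow_add_natCast hx.ne',
        Real.rpow_add hx, ← Real.sqrt_eq_rpow, mul_pow, pow_succ √x, pow_mul √x,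
        Real.sq_sqrt hx.le, neg_mul]
      ring
    have h3 := HasSum.zero_add (f := fun m => F m x) h2
    rw [h3.tsum_eq]
    change _ = 1 / 2 * (x ^ (α + 1 - 1) * Real.exp (-(c * x))) + _
    rw [add_sub_cancel_right, neg_mul]
    ring
  rw [hL, ← main.tsum_eq]
  have hi : ∀ m, ∫ x in Ioi (0:ℝ), F m x = K m * ((1 / c) ^ s m * Real.Gamma (s m)) :=
    fun m => (aux_int_s14 _ _ _ (hs m) hc).2.1
  have hmain := main.summable
  have : ∑' m, ∫ x in Ioi (0:ℝ), F m x = ∑' m, K m * ((1 / c) ^ s m * Real.Gamma (s m)) :=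
    tsum_congr hi
  refine this.trans ?_
  rw [((summable_nat_add_iff 1).1 hsum1).tsum_eq_zero_add]
  have e : ∀ n : ℕ, K (n + 1) * ((1 / c) ^ s (n + 1) * Real.Gamma (s (n + 1))) = _ :=
    fun n => aux_term α c h hα hc n
  rw [tsum_congr e, tsum_mul_left, ← hyp2F1]
  change 1 / 2 * ((1 / c) ^ (α + 1) * Real.Gamma (α + 1)) + _ = _
  have hG : Real.Gamma (α + 3 / 2) ≠ 0 := (Real.Gamma_pos_of_pos (by linarith)).ne'
  rw [betaFun, Real.Gamma_one_half_eq, show 1 / 2 + (α + 1) = α + 3 / 2 by ring, mul_add,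
    ← mul_assoc, Real.sqrt_mul (by norm_num), Real.div_rpow zero_le_one hc.le, Real.one_rpow]
  congr 1
  swap
  · rw [mul_assoc]
  have h2 : √2 * √2 = 2 := Real.mul_self_sqrt (by norm_num)
  have : c ^ (α + 1) ≠ 0 := by positivity
  have : √π ≠ 0 := by positivity
  have : √2 ≠ 0 := by positivity
  generalize Real.Gamma (α + 3 / 2) = G at *
  field_simp
  rw [pow_two, h2]
  try ring
end
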